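/- Let 0 < d < π, a > 0, and λ ∈ ℂ \ [1,+∞). Suppose ψ : ℝ² → ℂ is continuous on the closed strip {(x₁,x₂) : −d ≤ x₂ ≤ π}, smooth on Π_a, ψ and its gradient are square-integrable over Π_a, Δψ + λψ = 0 holds on Π_a, and ψ vanishes on Γ_a. Then there exists C > 0 such that for all (x₁,x₂) with |x₁| ≥ a + 1 and −d ≤ x₂ ≤ 0: |ψ(x₁,x₂)| ≤ C·e^{−Re√(π²/d² − λ)·|x₁|}, and the same bound (with the same type of constant) holds for |∇ψ(x₁,x₂)| on that region. -/

import Mathlib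

/-!
The lower channel to one side of the window is, after a reflection, a half strip `x > a`,
`0 < y < d` in which `U` solves `ΔU + lam U = 0` and vanishes on both horizontal sides. The `n`-th
sine coefficient `c` of `U x` should solve `c'' = k² c` with `k = √(n²π²/d² - lam)`. As `lam` avoids
`[1, ∞)` and `d < π`, the real part of `k` is positive, so that square integrability excludes the
growing exponential and leaves `c (x + t) = exp (-k t) c x`. Since `Re k` increases with `|n|`, the
first mode is the slowest one, and summing the sine series gives the rate `Re √(π²/d² - lam)`
(`halfStrip_decay`).

`ψ` is only assumed continuous up to the boundary of the channel, so the equation for `c` cannot be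
obtained by differentiating under the integral sign and integrating by parts up to the boundary.
Instead, the coefficients are taken over the interval shrunk by a factor `th < 1`. These solve
`c'' = k² c + h`, where `h` depends on the values of `U` alone and tends to `0` locally uniformly as
`th → 1` (`shrunkCoeff_ode`). In the limit one obtains the integrated form of the equation,
`c (x + t) + c (x - t) = 2 cosh (k t) c x` (`dalembert_approx`, `sinCoeff_dalembert`), which needs no
derivatives of `c` and already yields the exponential decay (`exp_decay_of_dalembert`).

The gradient has to be bounded on the closed channel as well. At a boundary point `fderiv` is `0` by
convention if `ψ` is not differentiable there. Otherwise the two partial derivatives are limits of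
difference quotients, and those with both points in the closed channel are controlled by Lipschitz
bounds read off from the sine series.
-/

open MeasureTheory Set Filter

noncomputable section

/-- Principal branch of the complex square root (analytic off `(-∞,0]`, `√1 = 1`). -/
def csqrt (z : ℂ) : ℂ := z ^ (1/2 : ℂ)

/-- The Laplacian of a function on `ℝ²`. -/
def lap (f : ℝ × ℝ → ℂ) (p : ℝ × ℝ) : ℂ :=
  fderiv ℝ (fun q => fderiv ℝ f q (1, 0)) p (1, 0) +
  fderiv ℝ (fun q => fderiv ℝ f q (0, 1)) p (0, 1)

open scoped Topology

/-! ### The transverse exponents -/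

theorem csqrt_sq (z : ℂ) : csqrt z ^ 2 = z := by
  rw [csqrt, one_div]
  exact Complex.cpow_ofNat_inv_pow z 2

/-- The principal argument of `z` off the cut lies in `(-π, π)`, so that of its root lies in
`(-π/2, π/2)`. -/
theorem csqrt_re_pos {z : ℂ} (hz : z ∈ Complex.slitPlane) : 0 < (csqrt z).re := by
  have h0 : z ≠ 0 := Complex.slitPlane_ne_zero hz
  rw [csqrt, Complex.cpow_def_of_ne_zero h0, Complex.exp_re]
  refine mul_pos (Real.exp_pos _) (Real.cos_pos_of_mem_Ioo ?_)
  have him : (Complex.log z * (1 / 2)).im = z.arg / 2 := by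
    rw [Complex.mul_im]
    norm_num [Complex.log_im, Complex.div_re, Complex.div_im]
    ring
  rw [him]
  have h1 := Complex.neg_pi_lt_arg z
  have h2 : z.arg < Real.pi := lt_of_le_of_ne (Complex.arg_le_pi z)
    (Complex.mem_slitPlane_iff_arg.1 hz).1
  constructor <;> linarith

/-- The transverse exponents: `chanExp d lam n = √(n²π²/d² - lam)`, so that the `n`-th sine mode of a
decaying solution behaves like `exp (-chanExp d lam n * x)`. Negative `n` are allowed because the
sine series is handled as a Fourier series over `ℤ`. -/
def chanExp (d : ℝ) (lam : ℂ) (n : ℤ) : ℂ :=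
  csqrt (((n : ℝ) ^ 2 * (Real.pi ^ 2 / d ^ 2) : ℝ) - lam)

theorem chanExp_sq (d : ℝ) (lam : ℂ) (n : ℤ) :
    chanExp d lam n ^ 2 = (((n : ℝ) ^ 2 * (Real.pi ^ 2 / d ^ 2) : ℝ) : ℂ) - lam := csqrt_sq _

theorem one_le_int_sq {n : ℤ} (hn : n ≠ 0) : (1 : ℝ) ≤ (n : ℝ) ^ 2 := by
  have : (1 : ℤ) ≤ n ^ 2 := by
    have := sq_nonneg n
    have h2 : n ^ 2 ≠ 0 := pow_ne_zero 2 hn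
    omega
  exact_mod_cast this

/-- Since `d < π`, every threshold `n²π²/d²` with `n ≠ 0` is at least `1`, and `lam` avoids the ray
above it. -/
theorem chanExp_re_pos {d : ℝ} (hd0 : 0 < d) (hdπ : d < Real.pi) {lam : ℂ}
    (hlam : ∀ t : ℝ, 1 ≤ t → lam ≠ (t : ℂ)) {n : ℤ} (hn : n ≠ 0) :
    0 < (chanExp d lam n).re := by
  apply csqrt_re_pos
  by_contra hs
  rw [Complex.mem_slitPlane_iff_not_le_zero, not_not, Complex.le_def] at hs
  obtain ⟨h1, h2⟩ := hs
  simp only [Complex.sub_re, Complex.ofReal_re, Complex.zero_re, Complex.sub_im, Complex.ofReal_im,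
    Complex.zero_im] at h1 h2
  have h3 : 1 ≤ Real.pi ^ 2 / d ^ 2 := by
    rw [one_le_div (by positivity)]
    gcongr
  have h4 := one_le_int_sq hn
  refine hlam lam.re (by nlinarith) ?_
  apply Complex.ext
  · simp
  · simp; linarith

/-- Since `Re √(s - lam)` increases with the real parameter `s`, the first mode decays slowest. -/
theorem chanExp_re_mono {d : ℝ} (hd0 : 0 < d) (hdπ : d < Real.pi) {lam : ℂ}
    (hlam : ∀ t : ℝ, 1 ≤ t → lam ≠ (t : ℂ)) {n : ℤ} (hn : n ≠ 0) :
    (chanExp d lam 1).re ≤ (chanExp d lam n).re := by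
  have hp := chanExp_re_pos hd0 hdπ hlam one_ne_zero
  have hP := chanExp_re_pos hd0 hdπ hlam hn
  have e1 := chanExp_sq d lam 1
  have en := chanExp_sq d lam n
  have hw : 0 ≤ Real.pi ^ 2 / d ^ 2 := by positivity
  have h4 := one_le_int_sq hn
  generalize Real.pi ^ 2 / d ^ 2 = m at *
  generalize chanExp d lam 1 = z at *
  generalize chanExp d lam n = w at *
  have a1 := congrArg Complex.re e1
  have a2 := congrArg Complex.im e1
  have b1 := congrArg Complex.re en
  have b2 := congrArg Complex.im en
  simp only [pow_two, Complex.mul_re, Complex.mul_im, Complex.sub_re, Complex.sub_im,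
    Complex.ofReal_re, Complex.ofReal_im, Int.cast_one] at a1 a2 b1 b2
  -- real and imaginary parts of `w² - z²` are known: a smaller `w.re` forces a larger `|w.im|`,
  -- hence a smaller real part of the square
  by_contra! hlt
  have h5 : w.re * w.re < z.re * z.re := by nlinarith
  have h6 : w.re * w.im = z.re * z.im := by linarith
  have h7 : z.im * z.im ≤ w.im * w.im := by
    by_contra! h8
    have : (w.re * w.im) * (w.re * w.im) < (z.re * z.im) * (z.re * z.im) := by
      calc _ = (w.re * w.re) * (w.im * w.im) := by ring
        _ ≤ (w.re * w.re) * (z.im * z.im) := by gcongr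
        _ < (z.re * z.re) * (z.im * z.im) := by
          have : 0 < z.im * z.im := lt_of_le_of_lt (mul_self_nonneg _) h8
          gcongr
        _ = _ := by ring
    rw [h6] at this
    exact lt_irrefl _ this
  nlinarith [mul_nonneg (sub_nonneg.2 h4) hw]

/-- `chanExp d lam n` differs from `|n| π / d` by at most `1 + ‖lam‖`, as far as the real part from
below and the modulus from above are concerned. -/
theorem chanExp_bounds {d : ℝ} (hd0 : 0 < d) {lam : ℂ} (n : ℤ) (hP : 0 < (chanExp d lam n).re) :
    |(n : ℝ)| * (Real.pi / d) - (1 + ‖lam‖) ≤ (chanExp d lam n).re ∧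
      ‖chanExp d lam n‖ ≤ |(n : ℝ)| * (Real.pi / d) + (1 + ‖lam‖) := by
  have en := chanExp_sq d lam n
  generalize chanExp d lam n = w at *
  have hw : 0 < Real.pi / d := by positivity
  have hsq : (n : ℝ) ^ 2 * (Real.pi ^ 2 / d ^ 2) = (|(n : ℝ)| * (Real.pi / d)) ^ 2 := by
    rw [mul_pow, sq_abs, div_pow]
  rw [hsq] at en
  have hω : 0 ≤ |(n : ℝ)| * (Real.pi / d) := by positivity
  generalize |(n : ℝ)| * (Real.pi / d) = ω at *
  have hl := norm_nonneg lam
  constructor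
  · have b1 := congrArg Complex.re en
    simp only [pow_two, Complex.mul_re, Complex.sub_re, Complex.ofReal_re] at b1
    have := Complex.re_le_norm lam
    by_contra! h
    nlinarith [mul_self_nonneg w.im]
  · have b1 := congrArg norm en
    rw [norm_pow] at b1
    have : ‖((ω ^ 2 : ℝ) : ℂ) - lam‖ ≤ ω ^ 2 + ‖lam‖ := by
      refine (norm_sub_le _ _).trans ?_
      rw [Complex.norm_real, Real.norm_of_nonneg (sq_nonneg _)]
    by_contra! h
    nlinarith [norm_nonneg w]

theorem exp_sub_one_norm_le {z : ℂ} (hz : 0 ≤ z.re) : ‖Complex.exp (-z) - 1‖ ≤ ‖z‖ := by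
  have hs : Convex ℝ {w : ℂ | w.re ≤ 0} := convex_halfSpace_re_le 0
  have := hs.norm_image_sub_le_of_norm_hasDerivWithin_le (f := Complex.exp) (f' := Complex.exp)
    (C := 1) (x := 0) (y := -z)
    (fun x _ => (Complex.hasDerivAt_exp x).hasDerivWithinAt)
    (fun x hx => by rw [Complex.norm_exp]; exact Real.exp_le_one_iff.2 hx) (by simp) (by simpa)
  simpa using this

/-- Summability of the majorant that controls the sine series and its difference quotients. -/
theorem summable_majorant {d : ℝ} (hd0 : 0 < d) (A B : ℝ) :
    Summable fun n : ℤ => Real.exp (-(|(n : ℝ)| * (Real.pi / d))) * (A + B * |(n : ℝ)|) := by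
  have hw : 0 < Real.pi / d := by positivity
  have hr : ‖Real.exp (-(Real.pi / d))‖ < 1 := by
    rw [Real.norm_of_nonneg (Real.exp_pos _).le]
    simpa using hw
  have h : Summable fun n : ℕ => Real.exp (-((n : ℝ) * (Real.pi / d))) * (A + B * n) := by
    have h0 := (summable_pow_mul_geometric_of_norm_lt_one 0 hr).mul_left A
    have h1 := (summable_pow_mul_geometric_of_norm_lt_one 1 hr).mul_left B
    refine (h0.add h1).congr fun n => ?_
    rw [show -((n : ℝ) * (Real.pi / d)) = n * (-(Real.pi / d)) by ring, Real.exp_nat_mul]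
    ring
  refine Summable.of_nat_of_neg ?_ ?_ <;> simpa using h

/-! ### Sine series -/

/-- The `n`-th sine coefficient (up to normalisation) of a function on `[0, d]`. -/
def sinCoeff (d : ℝ) (g : ℝ → ℂ) (n : ℤ) : ℂ :=
  ∫ y in (0 : ℝ)..d, g y * (Real.sin (n * Real.pi / d * y) : ℂ)

/-- The function `y ↦ g (max y 0) - g (max (-y) 0)` is the odd extension of `g` to `[-d, d]` when
`g 0 = 0`. The Fourier coefficients of its `2d`-periodization are the sine coefficients of `g`. -/
theorem fourier_oddExt {d : ℝ} (hd : 0 < d) {g : ℝ → ℂ} (hg : Continuous g) (g0 : g 0 = 0)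
    (n : ℤ) :
    haveI : Fact (0 < 2 * d) := ⟨by positivity⟩
    fourierCoeff (AddCircle.liftIoc (2 * d) (-d) fun y => g (max y 0) - g (max (-y) 0)) n =
      -(Complex.I / d) * sinCoeff d g n := by
  have : Fact (0 < 2 * d) := ⟨by positivity⟩
  have hdc : (d : ℂ) ≠ 0 := by exact_mod_cast hd.ne'
  set E : ℝ → ℂ := fun y => Complex.exp (-(Complex.I * (n * Real.pi / d * y : ℝ))) with hE
  have hEc : Continuous E := by fun_prop
  set f : ℝ → ℂ := fun y => g (max y 0) - g (max (-y) 0) with hf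
  have hfc : Continuous f := by fun_prop
  rw [fourierCoeff_liftIoc_eq, fourierCoeffOn_eq_integral]
  have e1 : ∀ y : ℝ, fourier (-n) (y : AddCircle (-d + 2 * d - -d)) = E y := by
    intro y
    rw [fourier_coe_apply, hE]
    congr 1
    push_cast
    have : (-(d : ℂ) + 2 * d - -d) = 2 * d := by ring
    rw [this]
    field_simp
  have hi : ∀ u v : ℝ, IntervalIntegrable (fun y => E y * f y) volume u v := fun u v =>
    (hEc.mul hfc).intervalIntegrable _ _
  have hneg : ∫ y in (-d)..0, E y * f y = ∫ y in (0 : ℝ)..d, E (-y) * f (-y) := by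
    rw [intervalIntegral.integral_comp_neg (fun y => E y * f y), neg_zero]
  have hend : -d + 2 * d = d := by ring
  simp only [e1, smul_eq_mul, hend]
  have hi' : IntervalIntegrable (fun y => E (-y) * f (-y)) volume 0 d :=
    ((hEc.comp continuous_neg).mul (hfc.comp continuous_neg)).intervalIntegrable _ _
  rw [← intervalIntegral.integral_add_adjacent_intervals (hi (-d) 0) (hi 0 d), hneg,
    ← intervalIntegral.integral_add hi' (hi 0 d)]
  have e2 : ∀ y ∈ uIcc 0 d, E (-y) * f (-y) + E y * f y =
      (-2 * Complex.I) * (g y * (Real.sin (n * Real.pi / d * y) : ℂ)) := by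
    intro y hy
    rw [uIcc_of_le hd.le] at hy
    have a1 : max y 0 = y := max_eq_left hy.1
    have a2 : max (-y) 0 = 0 := max_eq_right (by linarith [hy.1])
    simp only [hE, hf, neg_neg, a1, a2, mul_neg, Complex.ofReal_neg, g0, sub_zero, zero_sub]
    rw [Complex.ofReal_sin, Complex.sin]
    generalize ((n * Real.pi / d * y : ℝ) : ℂ) = θ
    rw [mul_comm Complex.I θ, show -θ * Complex.I = -(θ * Complex.I) by ring]
    linear_combination (g y * (Complex.exp (-(θ * Complex.I)) - Complex.exp (θ * Complex.I))) * Complex.I_sq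
  rw [intervalIntegral.integral_congr e2, intervalIntegral.integral_const_mul]
  rw [sinCoeff, Complex.real_smul]
  push_cast
  field_simp
  ring

/-- Sine series of a function vanishing at both ends of `[0, d]`, written as a Fourier series over
`ℤ`. -/
theorem hasSum_sine {d : ℝ} (hd : 0 < d) {g : ℝ → ℂ} (hg : Continuous g) (g0 : g 0 = 0)
    (gd : g d = 0) (hs : Summable (sinCoeff d g)) {y : ℝ} (hy : y ∈ Icc 0 d) :
    HasSum (fun n : ℤ => -(Complex.I / d) * sinCoeff d g n *
      Complex.exp (Complex.I * (n * Real.pi / d * y : ℝ))) (g y) := by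
  have : Fact (0 < 2 * d) := ⟨by positivity⟩
  have hdc : (d : ℂ) ≠ 0 := by exact_mod_cast hd.ne'
  set f : ℝ → ℂ := fun y => g (max y 0) - g (max (-y) 0) with hf
  have hfc : Continuous f := by fun_prop
  have hend : f (-d) = f (-d + 2 * d) := by
    rw [show -d + 2 * d = d by ring]
    simp [hf, hd.le, g0, gd]
  let F : C(AddCircle (2 * d), ℂ) :=
    ⟨AddCircle.liftIoc (2 * d) (-d) f, AddCircle.liftIoc_continuous hend hfc.continuousOn⟩
  have hF : ∀ n, fourierCoeff F n = -(Complex.I / d) * sinCoeff d g n :=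
    fun n => fourier_oddExt hd hg g0 n
  have hsF : Summable (fourierCoeff F) := by
    simpa only [funext hF] using hs.mul_left (-(Complex.I / d))
  have key := has_pointwise_sum_fourier_series_of_summable hsF (y : AddCircle (2 * d))
  have hval : F (y : AddCircle (2 * d)) = g y := by
    have : AddCircle.liftIoc (2 * d) (-d) f (y : AddCircle (2 * d)) = f y :=
      AddCircle.liftIoc_coe_apply ⟨by linarith [hy.1], by linarith [hy.2]⟩
    change AddCircle.liftIoc (2 * d) (-d) f (y : AddCircle (2 * d)) = _
    rw [this]
    simp [hf, hy.1, g0]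
  rw [hval] at key
  convert key using 2 with n
  rw [hF, fourier_coe_apply, smul_eq_mul]
  congr 2
  push_cast
  field_simp

/-! ### The equation `c'' = k² c` in integrated form -/

/-- A `C²` function with `f'' = k² f + h` satisfies d'Alembert's equation
`f (x + t) + f (x - t) = 2 cosh (k t) f x` up to an error controlled by `h`. -/
theorem dalembert_approx {f f1 f2 : ℝ → ℂ} {k : ℂ} (hk : k ≠ 0) {x t η : ℝ} (ht : 0 ≤ t)
    (hf : ∀ s ∈ Icc (x - t) (x + t), HasDerivAt f (f1 s) s)
    (hf1 : ∀ s ∈ Icc (x - t) (x + t), HasDerivAt f1 (f2 s) s)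
    (hη : ∀ s ∈ Icc 0 t, ‖Complex.sinh (k * (t - s : ℝ)) / k *
      ((f2 (x + s) - k ^ 2 * f (x + s)) + (f2 (x - s) - k ^ 2 * f (x - s)))‖ ≤ η) :
    ‖f (x + t) + f (x - t) - 2 * Complex.cosh (k * t) * f x‖ ≤ η * t := by
  -- `Φ 0 = 2 cosh (k t) f x`, `Φ t = f (x + t) + f (x - t)`, and `Φ'` only sees `f'' - k² f`.
  set Φ : ℝ → ℂ := fun s => Complex.cosh (k * (t - s : ℝ)) * (f (x + s) + f (x - s)) +
    Complex.sinh (k * (t - s : ℝ)) / k * (f1 (x + s) - f1 (x - s)) with hΦ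
  have hd : ∀ s ∈ Icc 0 t, HasDerivAt Φ (Complex.sinh (k * (t - s : ℝ)) / k *
      ((f2 (x + s) - k ^ 2 * f (x + s)) + (f2 (x - s) - k ^ 2 * f (x - s)))) s := by
    intro s hs
    have m1 : x + s ∈ Icc (x - t) (x + t) := ⟨by linarith [hs.1], by linarith [hs.2]⟩
    have m2 : x - s ∈ Icc (x - t) (x + t) := ⟨by linarith [hs.2], by linarith [hs.1]⟩
    have hp : HasDerivAt (fun s : ℝ => x + s) 1 s := (hasDerivAt_id s).const_add x
    have hm : HasDerivAt (fun s : ℝ => x - s) (-1) s := (hasDerivAt_id s).const_sub x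
    have fp := (hf _ m1).scomp s hp
    have fm := (hf _ m2).scomp s hm
    have f1p := (hf1 _ m1).scomp s hp
    have f1m := (hf1 _ m2).scomp s hm
    have hl : HasDerivAt (fun s : ℝ => k * ((t - s : ℝ) : ℂ)) (k * (-1 : ℝ)) s :=
      (((hasDerivAt_id s).const_sub t).ofReal_comp).const_mul k
    have hc := (Complex.hasDerivAt_cosh _).comp s hl
    have hsn := (Complex.hasDerivAt_sinh _).comp s hl
    have := (hc.mul (fp.add fm)).add ((hsn.div_const k).mul (f1p.sub f1m))
    refine HasDerivAt.congr_deriv (f := Φ) this ?_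
    simp only [Function.comp, Pi.add_apply, Pi.sub_apply]
    push_cast
    simp only [one_smul, neg_smul]
    field_simp
    ring
  have h := norm_image_sub_le_of_norm_deriv_le_segment' (f := Φ) (C := η)
    (fun s hs => (hd s hs).hasDerivWithinAt)
    (fun s hs => hη s (Ico_subset_Icc_self hs)) t ⟨ht, le_refl t⟩
  have e : Φ t - Φ 0 = f (x + t) + f (x - t) - 2 * Complex.cosh (k * t) * f x := by
    simp [hΦ]
    ring
  rwa [e, sub_zero] at h

/-- Among the solutions of d'Alembert's equation on a half line, only the decaying exponential is
bounded on average. -/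
theorem exp_decay_of_dalembert {c : ℝ → ℂ} {k : ℂ} {a M : ℝ} (hk : 0 < k.re) (hc : Continuous c)
    (hfe : ∀ y t, a ≤ y → 0 ≤ t →
      c (y + 2 * t) + c y = 2 * Complex.cosh (k * t) * c (y + t))
    (hM : ∀ x0, a ≤ x0 → ∫ x in x0..(x0 + 1), ‖c x‖ ≤ M) {x t : ℝ} (hx : a ≤ x) (ht : 0 ≤ t) :
    c (x + t) = Complex.exp (-(k * t)) * c x := by
  rcases ht.eq_or_lt with rfl | ht0
  · simp
  -- the growing part of `c`: a step of length `t` multiplies it by `exp (k t)`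
  set B : ℝ → ℂ := fun x => c (x + t) - Complex.exp (-(k * t)) * c x with hB
  have hBc : Continuous B := by fun_prop
  have hBt : ∀ y, a ≤ y → B (y + t) = Complex.exp (k * t) * B y := by
    intro y hy
    have h := hfe y t hy ht
    rw [Complex.cosh] at h
    have e : Complex.exp (k * t) * Complex.exp (-(k * t)) = 1 := by
      rw [← Complex.exp_add]; simp
    simp only [hB]
    rw [show y + t + t = y + 2 * t by ring]
    linear_combination h + c y * e
  have hBj : ∀ j : ℕ, ∀ y, a ≤ y → B (y + j * t) = Complex.exp (k * t) ^ j * B y := by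
    intro j
    induction j with
    | zero => intro y _; simp
    | succ j ih =>
      intro y hy
      have : y + ((j + 1 : ℕ) : ℝ) * t = (y + j * t) + t := by push_cast; ring
      rw [this, hBt _ (by have : 0 ≤ (j : ℝ) * t := by positivity
                          linarith), ih y hy, pow_succ]
      ring
  have hn : ‖Complex.exp (-(k * t))‖ ≤ 1 := by
    rw [Complex.norm_exp]
    apply Real.exp_le_one_iff.2
    simp only [Complex.neg_re, Complex.re_mul_ofReal]
    nlinarith
  have hB_le : ∀ x0, a ≤ x0 → ∫ x in x0..(x0 + 1), ‖B x‖ ≤ 2 * M := by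
    intro x0 h0
    have i1 : ∫ x in x0..(x0 + 1), ‖c (x + t)‖ ≤ M := by
      rw [intervalIntegral.integral_comp_add_right (fun x => ‖c x‖),
        show x0 + 1 + t = x0 + t + 1 by ring]
      exact hM _ (by linarith)
    calc ∫ x in x0..(x0 + 1), ‖B x‖ ≤ ∫ x in x0..(x0 + 1), (‖c (x + t)‖ + ‖c x‖) := by
          apply intervalIntegral.integral_mono_on (by linarith)
          · exact hBc.norm.intervalIntegrable _ _
          · exact Continuous.intervalIntegrable (by fun_prop) _ _
          · intro y _
            refine (norm_sub_le _ _).trans ?_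
            rw [norm_mul]
            gcongr
            exact mul_le_of_le_one_left (norm_nonneg _) hn
      _ = (∫ x in x0..(x0 + 1), ‖c (x + t)‖) + ∫ x in x0..(x0 + 1), ‖c x‖ := by
          apply intervalIntegral.integral_add
          · exact Continuous.intervalIntegrable (by fun_prop) _ _
          · exact Continuous.intervalIntegrable (by fun_prop) _ _
      _ ≤ 2 * M := by linarith [hM x0 h0]
  have hB0 : B x = 0 := by
    by_contra hne
    have hJ : 0 < ∫ y in x..(x + 1), ‖B y‖ :=
      intervalIntegral.integral_pos (by linarith) hBc.norm.continuousOn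
        (fun _ _ => norm_nonneg _) ⟨x, ⟨le_refl _, by linarith⟩, norm_pos_iff.2 hne⟩
    have hgt : 1 < ‖Complex.exp (k * t)‖ := by
      rw [Complex.norm_exp]
      apply Real.one_lt_exp_iff.2
      simp only [Complex.re_mul_ofReal]
      positivity
    obtain ⟨j, hj⟩ := pow_unbounded_of_one_lt (2 * M / ∫ y in x..(x + 1), ‖B y‖) hgt
    rw [div_lt_iff₀ hJ] at hj
    have hjt : 0 ≤ (j : ℝ) * t := by positivity
    have h1 := hB_le (x + j * t) (by linarith)
    rw [show x + j * t + 1 = x + 1 + j * t by ring,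
      ← intervalIntegral.integral_comp_add_right (fun x => ‖B x‖)] at h1
    have h2 : ∫ y in x..(x + 1), ‖B (y + j * t)‖ =
        ∫ y in x..(x + 1), ‖Complex.exp (k * t)‖ ^ j * ‖B y‖ := by
      apply intervalIntegral.integral_congr
      intro y hy
      rw [uIcc_of_le (by linarith)] at hy
      simp only
      rw [hBj j y (hx.trans hy.1), norm_mul, norm_pow]
    rw [h2, intervalIntegral.integral_const_mul] at h1
    linarith
  exact sub_eq_zero.1 hB0

/-- Differentiation under the integral sign over `[0, d]` for a jointly continuous derivative. -/
theorem hasDerivAt_param {F F' : ℝ → ℝ → ℂ} {a d x : ℝ} (hd : 0 < d) (hx : a < x)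
    (hF : ContinuousOn (Function.uncurry F) (Ioi a ×ˢ Icc 0 d))
    (hF' : ContinuousOn (Function.uncurry F') (Ioi a ×ˢ Icc 0 d))
    (hder : ∀ x, a < x → ∀ z ∈ Icc 0 d, HasDerivAt (fun s => F s z) (F' x z) x) :
    HasDerivAt (fun x => ∫ z in (0 : ℝ)..d, F x z) (∫ z in (0 : ℝ)..d, F' x z) x := by
  have sl : ∀ {G : ℝ → ℝ → ℂ}, ContinuousOn (Function.uncurry G) (Ioi a ×ˢ Icc 0 d) →
      ∀ y, a < y → ContinuousOn (G y) (Icc 0 d) := by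
    intro G hG y hy
    exact hG.comp (f := fun z => (y, z)) (by fun_prop) (fun z hz => ⟨hy, hz⟩)
  have hsub : uIoc 0 d ⊆ Icc 0 d := by
    rw [uIoc_of_le hd.le]; exact Ioc_subset_Icc_self
  obtain ⟨δ, hδ, hxδ⟩ : ∃ δ, 0 < δ ∧ a < x - δ := ⟨(x - a) / 2, by linarith, by linarith⟩
  have hK : IsCompact (Icc (x - δ) (x + δ) ×ˢ Icc 0 d) := isCompact_Icc.prod isCompact_Icc
  obtain ⟨C, hC⟩ := hK.exists_bound_of_continuousOn (f := Function.uncurry F')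
    (hF'.mono (prod_mono (fun y hy => lt_of_lt_of_le hxδ hy.1) subset_rfl))
  have meas : ∀ {G : ℝ → ℝ → ℂ}, ContinuousOn (Function.uncurry G) (Ioi a ×ˢ Icc 0 d) →
      ∀ y, a < y → AEStronglyMeasurable (G y) (volume.restrict (uIoc 0 d)) := by
    intro G hG y hy
    exact ((sl hG y hy).mono hsub).aestronglyMeasurable measurableSet_uIoc
  refine (intervalIntegral.hasDerivAt_integral_of_dominated_loc_of_deriv_le
    (F := F) (F' := F') (s := Icc (x - δ) (x + δ)) (bound := fun _ => C)
    (Icc_mem_nhds (by linarith) (by linarith)) ?_ ?_ (meas hF' x hx) ?_ (by simp) ?_).2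
  · filter_upwards [lt_mem_nhds hx] with y hy using meas hF y hy
  · apply ContinuousOn.intervalIntegrable
    rw [uIcc_of_le hd.le]
    exact sl hF x hx
  · exact Eventually.of_forall fun z hz y hy => hC (y, z) ⟨hy, hsub hz⟩
  · exact Eventually.of_forall fun z hz y hy => hder y (lt_of_lt_of_le hxδ hy.1) z (hsub hz)

/-! ### Sine coefficients of a solution in a half strip -/

/-- `U` solves `ΔU + lam U = 0` classically in the half strip `x > a`, `0 < y < d`, with partial
derivatives `U1`, `U11` (in `x`) and `U2`, `U22` (in `y`), vanishes on both horizontal sides and is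
square integrable. Continuity and the boundary values are imposed for all real `x`, `y`: the
functions of interest are extended constantly outside the closed half strip. -/
structure HalfStripSol (a d : ℝ) (lam : ℂ) (U U1 U11 U2 U22 : ℝ → ℝ → ℂ) : Prop where
  cont : Continuous (Function.uncurry U)
  zero_bot : ∀ x, U x 0 = 0
  zero_top : ∀ x, U x d = 0
  c1 : ContinuousOn (Function.uncurry U1) (Ioi a ×ˢ Ioo 0 d)
  c11 : ContinuousOn (Function.uncurry U11) (Ioi a ×ˢ Ioo 0 d)
  c22 : ContinuousOn (Function.uncurry U22) (Ioi a ×ˢ Ioo 0 d)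
  d1 : ∀ x, a < x → ∀ y ∈ Ioo 0 d, HasDerivAt (fun s => U s y) (U1 x y) x
  d11 : ∀ x, a < x → ∀ y ∈ Ioo 0 d, HasDerivAt (fun s => U1 s y) (U11 x y) x
  d2 : ∀ x, a < x → ∀ y ∈ Ioo 0 d, HasDerivAt (fun s => U x s) (U2 x y) y
  d22 : ∀ x, a < x → ∀ y ∈ Ioo 0 d, HasDerivAt (fun s => U2 x s) (U22 x y) y
  helm : ∀ x, a < x → ∀ y ∈ Ioo 0 d, U11 x y + U22 x y + lam * U x y = 0
  sq_int : IntegrableOn (fun x => ∫ y in (0 : ℝ)..d, ‖U x y‖ ^ 2) (Ioi a)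

/-- The `n`-th sine coefficient of `U x` after the interval `[0, d]` has been shrunk about its
midpoint by the factor `th`. For `th < 1` only interior values of `U` enter, so that no regularity
of the derivatives up to the boundary is needed. -/
def shrunkCoeff (d : ℝ) (U : ℝ → ℝ → ℂ) (n : ℤ) (th x : ℝ) : ℂ :=
  sinCoeff d (fun z => U x (d / 2 + th * (z - d / 2))) n

theorem shrunk_mem {d th z : ℝ} (h0 : 0 < th) (h1 : th < 1) (hz : z ∈ Icc 0 d) (hd : 0 < d) :
    d / 2 + th * (z - d / 2) ∈ Ioo 0 d := by
  constructor <;> nlinarith [hz.1, hz.2, mul_nonneg h0.le hz.1, mul_nonneg h0.le (sub_nonneg.2 hz.2)]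

theorem continuous_shrunkCoeff {d : ℝ} {U : ℝ → ℝ → ℂ} (hU : Continuous (Function.uncurry U))
    (n : ℤ) : Continuous fun p : ℝ × ℝ => shrunkCoeff d U n p.1 p.2 := by
  unfold shrunkCoeff sinCoeff
  apply intervalIntegral.continuous_parametric_intervalIntegral_of_continuous'
  have : Continuous fun q : (ℝ × ℝ) × ℝ =>
      Function.uncurry U (q.1.2, d / 2 + q.1.1 * (q.2 - d / 2)) := hU.comp (by fun_prop)
  simp only [Function.uncurry] at this ⊢
  fun_prop

theorem shrunkCoeff_one (d : ℝ) (U : ℝ → ℝ → ℂ) (n : ℤ) (x : ℝ) :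
    shrunkCoeff d U n 1 x = sinCoeff d (U x) n := by
  simp [shrunkCoeff]

section
variable {a d : ℝ} {lam : ℂ} {U U1 U11 U2 U22 : ℝ → ℝ → ℂ}

theorem shrunk_contOn {G : ℝ → ℝ → ℂ} (hd : 0 < d)
    (hG : ContinuousOn (Function.uncurry G) (Ioi a ×ˢ Ioo 0 d)) {th : ℝ} (h0 : 0 < th)
    (h1 : th < 1) (w : ℝ) :
    ContinuousOn (Function.uncurry fun x z => G x (d / 2 + th * (z - d / 2)) *
      (Real.sin (w * z) : ℂ)) (Ioi a ×ˢ Icc 0 d) := by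
  have : ContinuousOn (fun p : ℝ × ℝ => G p.1 (d / 2 + th * (p.2 - d / 2))) (Ioi a ×ˢ Icc 0 d) :=
    hG.comp (f := fun p : ℝ × ℝ => (p.1, d / 2 + th * (p.2 - d / 2))) (by fun_prop)
      (fun p hp => ⟨hp.1, shrunk_mem h0 h1 hp.2 hd⟩)
  simp only [Function.uncurry_def]
  exact this.mul (by fun_prop)

theorem hasDerivAt_shrunkCoeff {G G1 : ℝ → ℝ → ℂ} (hd : 0 < d)
    (hG : ContinuousOn (Function.uncurry G) (Ioi a ×ˢ Ioo 0 d))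
    (hG1 : ContinuousOn (Function.uncurry G1) (Ioi a ×ˢ Ioo 0 d))
    (hder : ∀ x, a < x → ∀ y ∈ Ioo 0 d, HasDerivAt (fun s => G s y) (G1 x y) x)
    (n : ℤ) {th : ℝ} (h0 : 0 < th) (h1 : th < 1) {x : ℝ} (hx : a < x) :
    HasDerivAt (shrunkCoeff d G n th) (shrunkCoeff d G1 n th x) x :=
  hasDerivAt_param hd hx (shrunk_contOn hd hG h0 h1 _) (shrunk_contOn hd hG1 h0 h1 _)
    (fun y hy _ hz => (hder y hy _ (shrunk_mem h0 h1 hz hd)).mul_const _)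

/-- The defect of `shrunkCoeff` as a solution of `c'' = (chanExp d lam n)² c`. It vanishes for
`th = 1` because `U` vanishes on both sides of the strip. -/
def defect (d : ℝ) (U : ℝ → ℝ → ℂ) (n : ℤ) (th x : ℝ) : ℂ :=
  ((th ^ 2 : ℝ) : ℂ)⁻¹ * (((n * Real.pi / d : ℝ) ^ 2 : ℂ) * shrunkCoeff d U n th x +
    (n * Real.pi / d : ℝ) * ((Real.cos (n * Real.pi / d * d) : ℂ) * U x (d / 2 + th * (d - d / 2)) -
      U x (d / 2 + th * (0 - d / 2)))) - ((n * Real.pi / d : ℝ) ^ 2 : ℂ) * shrunkCoeff d U n th x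

theorem defect_one (h : HalfStripSol a d lam U U1 U11 U2 U22) (n : ℤ) (x : ℝ) :
    defect d U n 1 x = 0 := by
  simp [defect, h.zero_bot, h.zero_top]

/-- Two integrations by parts in `y` turn `ΔU + lam U = 0` into an ordinary differential equation for
the shrunk coefficient, whose right-hand side only involves values of `U`, not of its derivatives:
the `U2` boundary terms are killed by `sin 0 = sin (n π) = 0`. -/
theorem shrunkCoeff_ode (hd : 0 < d) (h : HalfStripSol a d lam U U1 U11 U2 U22) (n : ℤ)
    {th : ℝ} (h0 : 0 < th) (h1 : th < 1) {x : ℝ} (hx : a < x) :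
    shrunkCoeff d U11 n th x - chanExp d lam n ^ 2 * shrunkCoeff d U n th x = defect d U n th x := by
  set w : ℝ := n * Real.pi / d with hw
  have hwd : w * d = n * Real.pi := by rw [hw]; field_simp
  have hk : chanExp d lam n ^ 2 = (w : ℂ) ^ 2 - lam := by
    rw [chanExp_sq, hw]
    congr 1
    push_cast
    field_simp
  have hth : (th : ℂ) ≠ 0 := by exact_mod_cast h0.ne'
  set ℓ : ℝ → ℝ := fun z => d / 2 + th * (z - d / 2) with hℓ
  have hℓd : ∀ z, HasDerivAt ℓ th z := fun z =>
    HasDerivAt.congr_deriv (f := ℓ)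
      ((((hasDerivAt_id z).sub_const (d / 2)).const_mul th).const_add (d / 2)) (mul_one th)
  -- a primitive of `th² U22 sin + w² U sin` along the rescaled variable `ℓ z`
  set Φ : ℝ → ℂ := fun z => (th : ℂ) * U2 x (ℓ z) * (Real.sin (w * z) : ℂ) -
    w * (U x (ℓ z) * (Real.cos (w * z) : ℂ)) with hΦ
  have hΦd : ∀ z ∈ uIcc 0 d, HasDerivAt Φ ((th : ℂ) ^ 2 * (U22 x (ℓ z) * (Real.sin (w * z) : ℂ)) +
      (w : ℂ) ^ 2 * (U x (ℓ z) * (Real.sin (w * z) : ℂ))) z := by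
    intro z hz
    rw [uIcc_of_le hd.le] at hz
    have hm := shrunk_mem h0 h1 hz hd
    have hu : HasDerivAt (fun z => U x (ℓ z)) (th • U2 x (ℓ z)) z :=
      HasDerivAt.scomp (g₁ := fun y => U x y) z (h.d2 x hx _ hm) (hℓd z)
    have hu2 : HasDerivAt (fun z => U2 x (ℓ z)) (th • U22 x (ℓ z)) z :=
      HasDerivAt.scomp (g₁ := fun y => U2 x y) z (h.d22 x hx _ hm) (hℓd z)
    have hwz : HasDerivAt (fun z : ℝ => w * z) w z := by
      simpa using (hasDerivAt_id z).const_mul w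
    have hs := hwz.sin.ofReal_comp
    have hc := hwz.cos.ofReal_comp
    refine HasDerivAt.congr_deriv (f := Φ)
      (((hu2.const_mul (th : ℂ)).mul hs).sub ((hu.mul hc).const_mul (w : ℂ))) ?_
    simp only [Complex.real_smul]
    push_cast
    ring
  have cs : ∀ {G : ℝ → ℝ → ℂ}, ContinuousOn (Function.uncurry G) (Ioi a ×ˢ Ioo 0 d) →
      IntervalIntegrable (fun z => G x (ℓ z) * (Real.sin (w * z) : ℂ)) volume 0 d := by
    intro G hG
    apply ContinuousOn.intervalIntegrable
    rw [uIcc_of_le hd.le]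
    exact (shrunk_contOn hd hG h0 h1 w).comp (f := fun z => (x, z)) (by fun_prop)
      (fun z hz => ⟨hx, hz⟩)
  have i22 := cs h.c22
  have i0 := cs h.cont.continuousOn
  have ftc := intervalIntegral.integral_eq_sub_of_hasDerivAt hΦd
    ((i22.const_mul _).add (i0.const_mul _))
  rw [intervalIntegral.integral_add (i22.const_mul _) (i0.const_mul _),
    intervalIntegral.integral_const_mul, intervalIntegral.integral_const_mul] at ftc
  have e11 : shrunkCoeff d U11 n th x = -(∫ z in (0 : ℝ)..d, U22 x (ℓ z) * (Real.sin (w * z) : ℂ)) -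
      lam * ∫ z in (0 : ℝ)..d, U x (ℓ z) * (Real.sin (w * z) : ℂ) := by
    have i22n : IntervalIntegrable (fun z => -(U22 x (ℓ z) * (Real.sin (w * z) : ℂ)))
      volume 0 d := i22.neg
    rw [← intervalIntegral.integral_const_mul, ← intervalIntegral.integral_neg,
      ← intervalIntegral.integral_sub i22n (i0.const_mul _)]
    apply intervalIntegral.integral_congr
    intro z hz
    rw [uIcc_of_le hd.le] at hz
    have := h.helm x hx _ (shrunk_mem h0 h1 hz hd)
    simp only [hℓ]
    linear_combination (Real.sin (w * z) : ℂ) * this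
  have e0 : shrunkCoeff d U n th x = ∫ z in (0 : ℝ)..d, U x (ℓ z) * (Real.sin (w * z) : ℂ) := rfl
  rw [defect, e11, e0, hk]
  generalize (∫ z in (0 : ℝ)..d, U x (ℓ z) * (Real.sin (w * z) : ℂ)) = I0 at *
  generalize (∫ z in (0 : ℝ)..d, U22 x (ℓ z) * (Real.sin (w * z) : ℂ)) = I2 at *
  have hsd : Real.sin (w * d) = 0 := by rw [hwd]; exact Real.sin_int_mul_pi n
  simp only [hΦ, hsd, mul_zero, Real.sin_zero, Real.cos_zero, Complex.ofReal_zero,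
    Complex.ofReal_one, mul_one, hℓ, zero_sub] at ftc
  have : I2 = ((th : ℂ) ^ 2)⁻¹ * (-(w : ℂ) ^ 2 * I0 - w * (U x (d / 2 + th * (d - d / 2)) *
      (Real.cos (w * d) : ℂ)) + w * U x (d / 2 + th * -(d / 2))) := by
    rw [eq_inv_mul_iff_mul_eq₀ (pow_ne_zero 2 hth)]
    linear_combination ftc
  rw [this, ← hw]
  push_cast
  simp only [zero_sub]
  ring

/-- The sine coefficients satisfy d'Alembert's equation exactly: let `th` tend to `1` in the
approximate equation for `shrunkCoeff`. The equation `c'' = k² c` itself is not available without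
regularity of `U` up to the boundary. -/
theorem sinCoeff_dalembert (hd : 0 < d) (h : HalfStripSol a d lam U U1 U11 U2 U22) {n : ℤ}
    (hk : chanExp d lam n ≠ 0) {y t : ℝ} (hy : a ≤ y) (ht : 0 ≤ t) :
    sinCoeff d (U (y + 2 * t)) n + sinCoeff d (U y) n =
      2 * Complex.cosh (chanExp d lam n * t) * sinCoeff d (U (y + t)) n := by
  set k := chanExp d lam n with hkdef
  have hcs := continuous_shrunkCoeff (d := d) h.cont n
  set D : ℝ → ℝ → ℂ := fun th x => shrunkCoeff d U n th (x + t) + shrunkCoeff d U n th (x - t) -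
    2 * Complex.cosh (k * t) * shrunkCoeff d U n th x with hD
  have hDc : Continuous fun p : ℝ × ℝ => D p.1 p.2 := by
    have h1 := hcs.comp (f := fun p : ℝ × ℝ => (p.1, p.2 + t)) (by fun_prop)
    have h2 := hcs.comp (f := fun p : ℝ × ℝ => (p.1, p.2 - t)) (by fun_prop)
    exact (h1.add h2).sub (hcs.const_mul _)
  have key : ∀ x, a < x - t → D 1 x = 0 := by
    intro x hx
    have small : ∀ η > 0, ‖D 1 x‖ ≤ η * t := by
      intro η hη
      -- uniformly for `s ∈ [0, t]`, the forcing term tends to its value `0` at `th = 1`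
      have ev : ∀ᶠ th in 𝓝 (1 : ℝ), ∀ s ∈ Icc 0 t, ‖Complex.sinh (k * (t - s : ℝ)) / k *
          (defect d U n th (x + s) + defect d U n th (x - s))‖ < η := by
        apply isCompact_Icc.eventually_forall_of_forall_eventually
        intro s hs
        have cd : ∀ σ : ℝ, ContinuousAt
            (fun z : ℝ × ℝ => defect d U n z.1 (x + σ * z.2)) (1, s) := by
          intro σ
          have hU' : ∀ b : ℝ, Continuous fun z : ℝ × ℝ => U (x + σ * z.2) (d / 2 + z.1 * b) :=
            fun b => h.cont.comp
              (g := Function.uncurry U) (f := fun z : ℝ × ℝ => (x + σ * z.2, d / 2 + z.1 * b))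
              (by fun_prop)
          have h1 := hcs.comp (f := fun z : ℝ × ℝ => (z.1, x + σ * z.2)) (by fun_prop)
          have h2 := hU' (d - d / 2)
          have h3 := hU' (0 - d / 2)
          have h4 : ContinuousAt (fun z : ℝ × ℝ => ((z.1 ^ 2 : ℝ) : ℂ)⁻¹) (1, s) := by
            refine ContinuousAt.inv₀ (by fun_prop) (by simp)
          unfold defect
          exact (h4.mul (((continuous_const.mul h1).add
            (continuous_const.mul ((continuous_const.mul h2).sub h3))).continuousAt)).sub
            (continuous_const.mul h1).continuousAt
        have c1 := cd 1
        have c2 := cd (-1)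
        have hc : ContinuousAt (fun z : ℝ × ℝ => ‖Complex.sinh (k * (t - z.2 : ℝ)) / k *
          (defect d U n z.1 (x + 1 * z.2) + defect d U n z.1 (x + -1 * z.2))‖) (1, s) := by
          refine (ContinuousAt.mul ?_ (c1.add c2)).norm
          exact Continuous.continuousAt (by fun_prop)
        have := hc.eventually_lt (continuousAt_const (y := η)) (by simpa [defect_one h] using hη)
        simpa [sub_eq_add_neg] using this
      have ev2 : ∀ᶠ th in 𝓝[<] (1 : ℝ), ‖D th x‖ ≤ η * t := by
        filter_upwards [ev.filter_mono nhdsWithin_le_nhds,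
          Ioo_mem_nhdsLT (zero_lt_one (α := ℝ))] with th hth hth1
        refine dalembert_approx (f := shrunkCoeff d U n th) (f1 := shrunkCoeff d U1 n th)
          (f2 := shrunkCoeff d U11 n th) hk ht ?_ ?_ ?_
        · intro s hs
          exact hasDerivAt_shrunkCoeff hd h.cont.continuousOn h.c1 h.d1 n hth1.1 hth1.2
            (hx.trans_le hs.1)
        · intro s hs
          exact hasDerivAt_shrunkCoeff hd h.c1 h.c11 h.d11 n hth1.1 hth1.2 (hx.trans_le hs.1)
        · intro s hs
          rw [shrunkCoeff_ode hd h n hth1.1 hth1.2 (x := x + s) (by linarith [hs.1]),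
            shrunkCoeff_ode hd h n hth1.1 hth1.2 (x := x - s) (by linarith [hs.2])]
          exact (hth s hs).le
      have lim : Tendsto (fun th => ‖D th x‖) (𝓝[<] 1) (𝓝 ‖D 1 x‖) := by
        have : Continuous fun th => ‖D th x‖ :=
          (hDc.comp (f := fun th : ℝ => (th, x)) (by fun_prop)).norm
        exact (this.tendsto 1).mono_left nhdsWithin_le_nhds
      exact le_of_tendsto lim ev2
    rw [← norm_le_zero_iff]
    have lim : Tendsto (fun η : ℝ => η * t) (𝓝[>] 0) (𝓝 0) := by
      have : Continuous fun η : ℝ => η * t := by fun_prop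
      simpa using (this.tendsto 0).mono_left (nhdsWithin_le_nhds (s := Ioi 0))
    exact ge_of_tendsto lim (by filter_upwards [self_mem_nhdsWithin] with η hη using small η hη)
  -- the points `y + t` with `y = a` are reached by continuity
  have key2 : EqOn (fun y => D 1 (y + t)) (fun _ => 0) (Ici a) := by
    rw [← closure_Ioi]
    refine EqOn.closure (fun y hy => key _ (by simpa using hy)) ?_ continuous_const
    exact hDc.comp (f := fun y : ℝ => ((1 : ℝ), y + t)) (by fun_prop)
  have := key2 (mem_Ici.2 hy)
  simp only [hD, shrunkCoeff_one] at this
  rw [show y + t + t = y + 2 * t by ring, show y + t - t = y by ring] at this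
  linear_combination this
end

/-! ### Decay in a half strip -/

section
variable {a d : ℝ} {lam : ℂ} {U U1 U11 U2 U22 : ℝ → ℝ → ℂ}

theorem norm_sinCoeff_le (hd : 0 < d) {g : ℝ → ℂ} (hg : Continuous g) (n : ℤ) :
    ‖sinCoeff d g n‖ ≤ ∫ y in (0 : ℝ)..d, ‖g y‖ := by
  refine intervalIntegral.norm_integral_le_of_norm_le hd.le (Eventually.of_forall fun y _ => ?_)
    (hg.norm.intervalIntegrable _ _)
  rw [norm_mul, Complex.norm_real]
  exact mul_le_of_le_one_right (norm_nonneg _) (Real.abs_sin_le_one _)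

theorem HalfStripSol.slice (h : HalfStripSol a d lam U U1 U11 U2 U22) (x : ℝ) :
    Continuous (U x) := h.cont.comp (f := fun y => (x, y)) (by fun_prop)

/-- Each sine coefficient is a pure decaying exponential: square integrability bounds its averages
over unit intervals, which excludes the growing one. -/
theorem sinCoeff_decay (hd : 0 < d) (h : HalfStripSol a d lam U U1 U11 U2 U22) {n : ℤ}
    (hk : 0 < (chanExp d lam n).re) {x t : ℝ} (hx : a ≤ x) (ht : 0 ≤ t) :
    sinCoeff d (U (x + t)) n = Complex.exp (-(chanExp d lam n * t)) * sinCoeff d (U x) n := by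
  have hk0 : chanExp d lam n ≠ 0 := by
    intro h0
    simp [h0] at hk
  have hcs : Continuous fun x => sinCoeff d (U x) n := by
    have := (continuous_shrunkCoeff (d := d) h.cont n).comp
      (f := fun x : ℝ => ((1 : ℝ), x)) (by fun_prop)
    simpa only [Function.comp_def, shrunkCoeff_one] using this
  have hgc : Continuous fun x => ∫ y in (0 : ℝ)..d, ‖U x y‖ ^ 2 := by
    apply intervalIntegral.continuous_parametric_intervalIntegral_of_continuous'
    exact h.cont.norm.pow 2
  refine exp_decay_of_dalembert (c := fun x => sinCoeff d (U x) n) (a := a)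
    (M := d + ∫ x in Ioi a, ∫ y in (0 : ℝ)..d, ‖U x y‖ ^ 2) hk hcs
    (fun y t hy ht => sinCoeff_dalembert hd h hk0 hy ht) ?_ hx ht
  intro x0 h0
  have le1 : ∀ x, ‖sinCoeff d (U x) n‖ ≤ d + ∫ y in (0 : ℝ)..d, ‖U x y‖ ^ 2 := by
    intro x
    have hs := h.slice x
    -- `|u| ≤ 1 + |u|²`
    calc ‖sinCoeff d (U x) n‖ ≤ ∫ y in (0 : ℝ)..d, ‖U x y‖ := norm_sinCoeff_le hd hs n
      _ ≤ ∫ y in (0 : ℝ)..d, (1 + ‖U x y‖ ^ 2) := by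
          apply intervalIntegral.integral_mono_on hd.le
          · exact hs.norm.intervalIntegrable _ _
          · exact Continuous.intervalIntegrable (by fun_prop) _ _
          · intro y _
            nlinarith [sq_nonneg (‖U x y‖ - 1)]
      _ = d + ∫ y in (0 : ℝ)..d, ‖U x y‖ ^ 2 := by
          rw [intervalIntegral.integral_add (by simp)
            (Continuous.intervalIntegrable (by fun_prop) _ _)]
          simp
  calc ∫ x in x0..(x0 + 1), ‖sinCoeff d (U x) n‖
      ≤ ∫ x in x0..(x0 + 1), (d + ∫ y in (0 : ℝ)..d, ‖U x y‖ ^ 2) := by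
        apply intervalIntegral.integral_mono_on (by linarith)
        · exact hcs.norm.intervalIntegrable _ _
        · exact Continuous.intervalIntegrable (by fun_prop) _ _
        · intro y _
          exact le1 y
    _ = d + ∫ x in x0..(x0 + 1), ∫ y in (0 : ℝ)..d, ‖U x y‖ ^ 2 := by
        rw [intervalIntegral.integral_add (by simp) (hgc.intervalIntegrable _ _)]
        simp
    _ ≤ _ := by
        gcongr
        rw [intervalIntegral.integral_of_le (by linarith)]
        refine setIntegral_mono_set h.sq_int ?_ ?_
        · exact Eventually.of_forall fun x =>
            intervalIntegral.integral_nonneg hd.le (fun _ _ => by positivity)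
        · exact Eventually.of_forall fun x hx => lt_of_le_of_lt h0 hx.1

/-- Decay of a solution in the half strip, together with Lipschitz bounds of the same size, which
hold up to the boundary and replace gradient bounds. -/
theorem halfStrip_decay (hd : 0 < d) (hdπ : d < Real.pi)
    (hlam : ∀ t : ℝ, 1 ≤ t → lam ≠ (t : ℂ))
    (h : HalfStripSol a d lam U U1 U11 U2 U22) :
    ∃ C : ℝ, 0 < C ∧ ∀ x, a + 1 ≤ x → ∀ y ∈ Icc 0 d,
      ‖U x y‖ ≤ C * Real.exp (-(chanExp d lam 1).re * x) ∧
      (∀ s, 0 ≤ s → ‖U (x + s) y - U x y‖ ≤ C * Real.exp (-(chanExp d lam 1).re * x) * s) ∧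
      (∀ y' ∈ Icc 0 d,
        ‖U x y' - U x y‖ ≤ C * Real.exp (-(chanExp d lam 1).re * x) * |y' - y|) := by
  have hkp : ∀ {n : ℤ}, n ≠ 0 → 0 < (chanExp d lam n).re := fun hn => chanExp_re_pos hd hdπ hlam hn
  set r := (chanExp d lam 1).re with hr
  have hr0 : 0 < r := hkp one_ne_zero
  set L : ℝ := 1 + ‖lam‖ with hL
  have hL0 : 0 < L := by positivity
  set M : ℝ := ∫ y in (0 : ℝ)..d, ‖U a y‖ with hM
  have hM0 : 0 ≤ M := intervalIntegral.integral_nonneg hd.le (fun _ _ => norm_nonneg _)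
  set P : ℝ := M * Real.exp (r * a + r + L) with hP
  have hP0 : 0 ≤ P := by positivity
  set ω : ℤ → ℝ := fun n => |(n : ℝ)| * (Real.pi / d) with hω
  have hω0 : ∀ n, 0 ≤ ω n := fun n => by positivity
  set b : ℝ → ℤ → ℂ := fun x n => sinCoeff d (U x) n with hb
  have b0 : ∀ x, b x 0 = 0 := fun x => by simp [hb, sinCoeff]
  -- The distance `x - a ≥ 1` is split as `(x - a - 1) + 1`: the first part gives the common rate `r`,
  -- the unit left over gives the factor `exp (-ω n)` that makes the series converge.
  have hbx : ∀ x, a + 1 ≤ x → ∀ n, ‖b x n‖ ≤ P * Real.exp (-r * x) * Real.exp (-ω n) := by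
    intro x hx n
    rcases eq_or_ne n 0 with rfl | hn
    · rw [b0, norm_zero]; positivity
    have e := sinCoeff_decay hd h (hkp hn) (le_refl a) (t := x - a) (by linarith)
    rw [show a + (x - a) = x by ring] at e
    have hmono : r ≤ (chanExp d lam n).re := chanExp_re_mono hd hdπ hlam hn
    have hlow := (chanExp_bounds hd n (hkp hn)).1
    simp only [hb]
    rw [e, norm_mul, Complex.norm_exp, Complex.neg_re, Complex.re_mul_ofReal]
    calc Real.exp (-((chanExp d lam n).re * (x - a))) * ‖sinCoeff d (U a) n‖
        ≤ Real.exp (r * a + r + L + -r * x + -ω n) * M := by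
          gcongr
          · have : ω n - L ≤ (chanExp d lam n).re := hlow
            nlinarith
          · exact norm_sinCoeff_le hd (h.slice a) n
      _ = _ := by
          rw [hP, Real.exp_add, Real.exp_add (r * a + r + L)]
          ring
  have hbd : ∀ x, a + 1 ≤ x → ∀ s, 0 ≤ s → ∀ n, ‖b (x + s) n - b x n‖ ≤
      (ω n + L) * s * ‖b x n‖ := by
    intro x hx s hs n
    rcases eq_or_ne n 0 with rfl | hn
    · simp [b0]
    have e := sinCoeff_decay hd h (hkp hn) (x := x) (by linarith) hs
    have hup := (chanExp_bounds hd n (hkp hn)).2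
    simp only [hb]
    rw [e, ← sub_one_mul, norm_mul]
    gcongr
    refine (exp_sub_one_norm_le ?_).trans ?_
    · rw [Complex.re_mul_ofReal]
      exact mul_nonneg (hkp hn).le hs
    · rw [norm_mul, Complex.norm_real, Real.norm_of_nonneg hs]
      gcongr
  set W : ℤ → ℝ := fun n => Real.exp (-ω n) * (1 + L + ω n) with hW
  have hWs : Summable W := by
    refine (summable_majorant hd (1 + L) (Real.pi / d)).congr fun n => ?_
    simp only [hW, hω]
    ring
  have hW1 : ∀ n, Real.exp (-ω n) ≤ W n := fun n =>
    le_mul_of_one_le_right (Real.exp_pos _).le (by linarith [hω0 n])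
  have hWω : ∀ n, (ω n + L) * Real.exp (-ω n) ≤ W n := fun n => by
    rw [mul_comm]
    exact mul_le_mul_of_nonneg_left (by linarith) (Real.exp_pos _).le
  have hsum : ∀ x, a + 1 ≤ x → ∀ y ∈ Icc 0 d, HasSum (fun n : ℤ => -(Complex.I / d) * b x n *
      Complex.exp (Complex.I * (n * Real.pi / d * y : ℝ))) (U x y) := by
    intro x hx y hy
    refine hasSum_sine hd (h.slice x) (h.zero_bot x) (h.zero_top x) ?_ hy
    refine Summable.of_norm_bounded (hWs.mul_left (P * Real.exp (-r * x))) fun n => ?_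
    refine (hbx x hx n).trans ?_
    gcongr
    exact hW1 n
  have hId : ‖-(Complex.I / (d : ℂ))‖ = 1 / d := by
    rw [norm_neg, norm_div, Complex.norm_I, Complex.norm_real, Real.norm_of_nonneg hd.le]
  have hexp : ∀ θ : ℝ, ‖Complex.exp (Complex.I * θ)‖ = 1 := fun θ => by
    rw [mul_comm]; exact Complex.norm_exp_ofReal_mul_I θ
  set S := ∑' n, W n with hS
  have hSW : HasSum W S := hWs.hasSum
  have hS0 : 0 ≤ S := tsum_nonneg fun n => (Real.exp_pos _).le.trans (hW1 n)
  have bound : ∀ x, a + 1 ≤ x → ∀ q, 0 ≤ q → ∀ (f : ℤ → ℂ) (v : ℂ), HasSum f v →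
      (∀ n, ‖f n‖ ≤ 1 / d * ((ω n + L) * q * ‖b x n‖)) →
      ‖v‖ ≤ (P / d * S + 1) * Real.exp (-r * x) * q := by
    intro x hx q hq f v hf hle
    have h1 : ‖v‖ ≤ P / d * Real.exp (-r * x) * q * S := by
      rw [← hf.tsum_eq]
      refine tsum_of_norm_bounded (hSW.mul_left _) fun n => (hle n).trans ?_
      calc 1 / d * ((ω n + L) * q * ‖b x n‖)
          ≤ 1 / d * ((ω n + L) * q * (P * Real.exp (-r * x) * Real.exp (-ω n))) := by
            have := hω0 n
            gcongr
            exact hbx x hx n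
        _ = P / d * Real.exp (-r * x) * q * ((ω n + L) * Real.exp (-ω n)) := by ring
        _ ≤ _ := by
            gcongr
            exact hWω n
    have : 0 ≤ Real.exp (-r * x) * q := by positivity
    nlinarith
  refine ⟨P / d * S + 1, by positivity, fun x hx y hy => ⟨?_, ?_, ?_⟩⟩
  · rw [← mul_one (_ * Real.exp _)]
    refine bound x hx 1 zero_le_one _ _ (hsum x hx y hy) fun n => ?_
    rw [norm_mul, norm_mul, hId, hexp, mul_one]
    gcongr
    exact le_mul_of_one_le_left (norm_nonneg _) (by linarith [hω0 n, norm_nonneg lam])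
  · intro s hs
    refine bound x hx s hs _ _ ((hsum (x + s) (by linarith) y hy).sub (hsum x hx y hy)) fun n => ?_
    rw [← sub_mul, ← mul_sub, norm_mul, norm_mul, hId, hexp, mul_one]
    gcongr
    exact hbd x hx s hs n
  · intro y' hy'
    refine bound x hx _ (abs_nonneg _) _ _ ((hsum x hx y' hy').sub (hsum x hx y hy)) fun n => ?_
    rw [← mul_sub, norm_mul, norm_mul, hId, mul_assoc, mul_comm ‖b x n‖]
    gcongr
    have e : Complex.exp (Complex.I * (n * Real.pi / d * y' : ℝ)) -
        Complex.exp (Complex.I * (n * Real.pi / d * y : ℝ)) =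
        Complex.exp (Complex.I * (n * Real.pi / d * y : ℝ)) *
        (Complex.exp (Complex.I * (n * Real.pi / d * (y' - y) : ℝ)) - 1) := by
      rw [mul_sub, ← Complex.exp_add, mul_one]
      congr 2
      push_cast
      ring
    rw [e, norm_mul, hexp, one_mul]
    refine Real.norm_exp_I_mul_ofReal_sub_one_le.trans ?_
    rw [Real.norm_eq_abs, abs_mul, mul_div_assoc, abs_mul, abs_of_pos (div_pos Real.pi_pos hd)]
    gcongr
    simp only [hω]
    linarith
end

/-! ### From the channel to the half strip -/

/-- A one-sided Lipschitz bound controls a derivative, if there is one. -/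
theorem norm_le_of_right_slope {f : ℝ → ℂ} {f' : ℂ} {K : ℝ} (hf : HasDerivAt f f' 0)
    (hK : ∀ᶠ h in 𝓝[>] (0 : ℝ), ‖f h - f 0‖ ≤ K * h) : ‖f'‖ ≤ K := by
  refine le_of_tendsto hf.tendsto_slope_zero_right.norm ?_
  filter_upwards [hK, self_mem_nhdsWithin] with h hh hpos
  have hpos : 0 < h := hpos
  rw [zero_add, norm_smul, norm_inv, Real.norm_of_nonneg hpos.le, inv_mul_le_iff₀ hpos]
  linarith

theorem hasDerivAt_comp_fst {g : ℝ × ℝ → ℂ} {s x y : ℝ} (hg : DifferentiableAt ℝ g (s * x, -y)) :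
    HasDerivAt (fun u => g (s * u, -y)) (s * fderiv ℝ g (s * x, -y) (1, 0)) x := by
  have h1 : HasDerivAt (fun u : ℝ => ((s * u, -y) : ℝ × ℝ)) (s, 0) x :=
    HasDerivAt.prodMk (by simpa using (hasDerivAt_id x).const_mul s) (hasDerivAt_const _ _)
  have h2 := hg.hasFDerivAt.comp_hasDerivAt x h1
  refine h2.congr_deriv ?_
  rw [show ((s, 0) : ℝ × ℝ) = s • (1, 0) by simp, map_smul, Complex.real_smul]

theorem hasDerivAt_comp_snd {g : ℝ × ℝ → ℂ} {p y : ℝ} (hg : DifferentiableAt ℝ g (p, -y)) :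
    HasDerivAt (fun u => g (p, -u)) (-fderiv ℝ g (p, -y) (0, 1)) y := by
  have h1 : HasDerivAt (fun u : ℝ => ((p, -u) : ℝ × ℝ)) (0, -1) y :=
    HasDerivAt.prodMk (hasDerivAt_const _ _) (hasDerivAt_id y).neg
  have h2 := hg.hasFDerivAt.comp_hasDerivAt y h1
  refine h2.congr_deriv ?_
  rw [show ((0, -1) : ℝ × ℝ) = -(0, 1) by simp, map_neg]

/-- The lower channel to the right (`s = 1`) or to the left (`s = -1`) of the window, reflected onto
the half strip `x > a`, `0 < y < d` and extended constantly to the whole plane. -/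
def channelFun (a d s : ℝ) (ψ : ℝ × ℝ → ℂ) (x y : ℝ) : ℂ :=
  ψ (s * max x a, -(max 0 (min y d)))

theorem channelFun_eq {a d s : ℝ} {ψ : ℝ × ℝ → ℂ} {x y : ℝ} (hx : a ≤ x) (hy : y ∈ Icc 0 d) :
    channelFun a d s ψ x y = ψ (s * x, -y) := by
  rw [channelFun, max_eq_left hx, min_eq_left hy.2, max_eq_right hy.1]

theorem measurePreserving_reflect {s : ℝ} (hs : s = 1 ∨ s = -1) :
    MeasurePreserving (fun p : ℝ × ℝ => (s * p.1, -p.2)) := by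
  have h1 : MeasurePreserving (fun x : ℝ => s * x) := by
    rcases hs with rfl | rfl
    · simp only [one_mul]
      exact MeasurePreserving.id (volume : Measure ℝ)
    · simpa using Measure.measurePreserving_neg (volume : Measure ℝ)
  exact h1.prod (Measure.measurePreserving_neg (volume : Measure ℝ))

theorem halfStripSol_channel {a d s : ℝ} (hs : s = 1 ∨ s = -1) (hd : 0 < d) (ha : 0 < a)
    {lam : ℂ} {ψ : ℝ × ℝ → ℂ}
    (hcont : ContinuousOn ψ {p : ℝ × ℝ | -d ≤ p.2 ∧ p.2 ≤ 0})
    (hsmooth : ContDiffOn ℝ (⊤ : ℕ∞) ψ {p : ℝ × ℝ | -d < p.2 ∧ p.2 < 0})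
    (hL2 : IntegrableOn (fun p => ‖ψ p‖ ^ 2) {p : ℝ × ℝ | -d < p.2 ∧ p.2 < 0})
    (hHelm : ∀ p ∈ {p : ℝ × ℝ | -d < p.2 ∧ p.2 < 0}, lap ψ p + lam * ψ p = 0)
    (hbot : ∀ x₁, ψ (x₁, -d) = 0) (hwin : ∀ x₁ : ℝ, a ≤ |x₁| → ψ (x₁, 0) = 0) :
    HalfStripSol a d lam (channelFun a d s ψ)
      (fun x y => s * fderiv ℝ ψ (s * x, -y) (1, 0))
      (fun x y => s * (s * fderiv ℝ (fun q => fderiv ℝ ψ q (1, 0)) (s * x, -y) (1, 0)))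
      (fun x y => -fderiv ℝ ψ (s * x, -y) (0, 1))
      (fun x y => - -fderiv ℝ (fun q => fderiv ℝ ψ q (0, 1)) (s * x, -y) (0, 1)) := by
  set Ω : Set (ℝ × ℝ) := {p : ℝ × ℝ | -d < p.2 ∧ p.2 < 0} with hΩ
  have hΩo : IsOpen Ω := isOpen_Ioo.preimage continuous_snd
  have habs : ∀ x, |s * max x a| = max x a := by
    intro x
    have : |s| = 1 := by rcases hs with rfl | rfl <;> simp
    rw [abs_mul, this, one_mul, abs_of_nonneg (le_trans ha.le (le_max_right _ _))]
  have hmem : ∀ {x y : ℝ}, y ∈ Ioo 0 d → (s * x, -y) ∈ Ω := fun hy =>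
    ⟨by simpa using hy.2, by simpa using hy.1⟩
  have sm1 : ∀ v : ℝ × ℝ, ContDiffOn ℝ 2 (fun q => fderiv ℝ ψ q v) Ω := fun v =>
    ((contDiffOn_infty.1 hsmooth 3).fderiv_of_isOpen hΩo (m := 2) (by norm_num)).clm_apply contDiffOn_const
  have sm2 : ∀ v w : ℝ × ℝ, ContinuousOn (fun q => fderiv ℝ (fun q => fderiv ℝ ψ q v) q w) Ω :=
    fun v w => (((sm1 v).fderiv_of_isOpen hΩo (m := 1) (by norm_num)).clm_apply
      contDiffOn_const).continuousOn
  have df0 : ∀ {p}, p ∈ Ω → DifferentiableAt ℝ ψ p := fun hp =>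
    (hsmooth.contDiffAt (hΩo.mem_nhds hp)).differentiableAt (by simp)
  have df1 : ∀ v : ℝ × ℝ, ∀ {p}, p ∈ Ω → DifferentiableAt ℝ (fun q => fderiv ℝ ψ q v) p :=
    fun v _ hp => ((sm1 v).contDiffAt (hΩo.mem_nhds hp)).differentiableAt (by simp)
  have cc : ∀ {G : ℝ × ℝ → ℂ}, ContinuousOn G Ω →
      ContinuousOn (fun p : ℝ × ℝ => G (s * p.1, -p.2)) (Ioi a ×ˢ Ioo 0 d) := fun hG =>
    hG.comp (f := fun p : ℝ × ℝ => (s * p.1, -p.2)) (by fun_prop) (fun p hp => hmem hp.2)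
  constructor
  · refine hcont.comp_continuous
      (f := fun p : ℝ × ℝ => (s * max p.1 a, -(max 0 (min p.2 d)))) (by fun_prop) fun p => ⟨?_, ?_⟩
    · exact neg_le_neg (max_le hd.le (min_le_right _ _))
    · exact neg_nonpos.2 (le_max_left _ _)
  · intro x
    simp only [channelFun, min_eq_left hd.le, max_self, neg_zero]
    exact hwin _ (by rw [habs]; exact le_max_right _ _)
  · intro x
    simp only [channelFun, min_self, max_eq_right hd.le]
    exact hbot _
  · exact continuousOn_const.mul (cc (sm1 (1, 0)).continuousOn)
  · exact continuousOn_const.mul (continuousOn_const.mul (cc (sm2 (1, 0) (1, 0))))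
  · exact (cc (sm2 (0, 1) (0, 1))).neg.neg
  · intro x hx y hy
    refine (hasDerivAt_comp_fst (df0 (hmem hy))).congr_of_eventuallyEq ?_
    filter_upwards [lt_mem_nhds hx] with u hu
    exact channelFun_eq hu.le ⟨hy.1.le, hy.2.le⟩
  · intro x hx y hy
    exact (hasDerivAt_comp_fst (df1 (1, 0) (hmem hy))).const_mul _
  · intro x hx y hy
    refine (hasDerivAt_comp_snd (df0 (hmem hy))).congr_of_eventuallyEq ?_
    filter_upwards [Ioo_mem_nhds hy.1 hy.2] with u hu
    exact channelFun_eq hx.le ⟨hu.1.le, hu.2.le⟩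
  · intro x hx y hy
    exact (hasDerivAt_comp_snd (df1 (0, 1) (hmem hy))).neg
  · intro x hx y hy
    have := hHelm _ (hmem (x := x) hy)
    rw [lap] at this
    have hss : (s : ℂ) * s = 1 := by rcases hs with rfl | rfl <;> simp
    rw [channelFun_eq hx.le ⟨hy.1.le, hy.2.le⟩]
    linear_combination this +
      (fderiv ℝ (fun q => fderiv ℝ ψ q (1, 0)) (s * x, -y) (1, 0)) * hss
  · have hmp := (measurePreserving_reflect hs).restrict_preimage hΩo.measurableSet
    have h1 := hmp.integrable_comp_of_integrable hL2
    have h2 : IntegrableOn (fun p : ℝ × ℝ => ‖ψ (s * p.1, -p.2)‖ ^ 2) (Ioi a ×ˢ Ioo 0 d) :=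
      IntegrableOn.mono_set h1 (fun p hp => hmem hp.2)
    rw [IntegrableOn, Measure.volume_eq_prod, ← Measure.prod_restrict] at h2
    refine IntegrableOn.congr_fun h2.integral_prod_left (fun x hx => ?_) measurableSet_Ioi
    simp only
    rw [intervalIntegral.integral_of_le hd.le, integral_Ioc_eq_integral_Ioo]
    refine setIntegral_congr_fun measurableSet_Ioo fun y hy => ?_
    rw [channelFun_eq (le_of_lt hx) ⟨hy.1.le, hy.2.le⟩]

/-- The Lipschitz bounds of `halfStrip_decay` bound the two partial derivatives of `ψ` wherever its
gradient exists, on the boundary of the channel included. -/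
theorem channel_decay {a d s : ℝ} (hs : s = 1 ∨ s = -1) (hd : 0 < d) (hdπ : d < Real.pi)
    {lam : ℂ} (hlam : ∀ t : ℝ, 1 ≤ t → lam ≠ (t : ℂ)) {ψ : ℝ × ℝ → ℂ}
    (h : ∃ U1 U11 U2 U22, HalfStripSol a d lam (channelFun a d s ψ) U1 U11 U2 U22) :
    ∃ C : ℝ, 0 < C ∧ ∀ x, a + 1 ≤ x → ∀ y ∈ Icc 0 d,
      ‖ψ (s * x, -y)‖ ≤ C * Real.exp (-(chanExp d lam 1).re * x) ∧
      ‖fderiv ℝ ψ (s * x, -y)‖ ≤ C * Real.exp (-(chanExp d lam 1).re * x) := by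
  obtain ⟨U1, U11, U2, U22, h⟩ := h
  obtain ⟨C, hC, hb⟩ := halfStrip_decay hd hdπ hlam h
  refine ⟨2 * C, by positivity, fun x hx y hy => ?_⟩
  obtain ⟨b0, b1, b2⟩ := hb x hx y hy
  rw [channelFun_eq (by linarith) hy] at b0 b1 b2
  have hK : 0 ≤ C * Real.exp (-(chanExp d lam 1).re * x) := by positivity
  rw [mul_assoc]
  generalize C * Real.exp (-(chanExp d lam 1).re * x) = K at *
  refine ⟨by linarith, ?_⟩
  -- at a boundary point where `ψ` is not differentiable, `fderiv` is `0` by convention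
  by_cases hdf : DifferentiableAt ℝ ψ (s * x, -y)
  swap
  · rw [fderiv_zero_of_not_differentiableAt hdf, norm_zero]
    positivity
  have hns : ‖(s : ℂ)‖ = 1 := by rcases hs with rfl | rfl <;> simp
  have n1 : ‖fderiv ℝ ψ (s * x, -y) (1, 0)‖ ≤ K := by
    have hd1 := hasDerivAt_comp_fst hdf
    have hd2 : HasDerivAt (fun t => ψ (s * (x + t), -y))
        (s * fderiv ℝ ψ (s * x, -y) (1, 0)) 0 :=
      HasDerivAt.comp_const_add (f := fun u => ψ (s * u, -y)) x 0 (by simpa using hd1)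
    have := norm_le_of_right_slope (K := K) hd2 (by
      filter_upwards [self_mem_nhdsWithin] with t ht
      have ht : 0 < t := ht
      have := b1 t ht.le
      rw [channelFun_eq (by linarith) hy] at this
      simpa using this)
    rwa [norm_mul, hns, one_mul] at this
  have n2 : ‖fderiv ℝ ψ (s * x, -y) (0, 1)‖ ≤ K := by
    -- a direction pointing into the closed strip
    obtain ⟨τ, hτ, hin⟩ : ∃ τ : ℝ, |τ| = 1 ∧ ∀ᶠ t in 𝓝[>] (0 : ℝ), y + τ * t ∈ Icc 0 d := by
      rcases hy.2.lt_or_eq with hlt | heq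
      · refine ⟨1, by simp, ?_⟩
        filter_upwards [Ioo_mem_nhdsGT (sub_pos.2 hlt)] with t ht
        constructor <;> linarith [ht.1, ht.2, hy.1]
      · refine ⟨-1, by simp, ?_⟩
        filter_upwards [Ioo_mem_nhdsGT hd] with t ht
        constructor <;> linarith [ht.1, ht.2]
    have hd1 := hasDerivAt_comp_snd hdf
    have hl : HasDerivAt (fun t : ℝ => y + τ * t) τ 0 :=
      (((hasDerivAt_id (0 : ℝ)).const_mul τ).const_add y).congr_deriv (mul_one τ)
    have hd2 : HasDerivAt (fun t => ψ (s * x, -(y + τ * t)))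
        (τ • -fderiv ℝ ψ (s * x, -y) (0, 1)) 0 :=
      HasDerivAt.scomp (g₁ := fun u => ψ (s * x, -u)) 0 (by simpa using hd1) hl
    have := norm_le_of_right_slope (K := K) hd2 (by
      filter_upwards [hin, self_mem_nhdsWithin] with t ht ht0
      have ht0 : 0 < t := ht0
      have := b2 _ ht
      rw [channelFun_eq (by linarith) ht, add_sub_cancel_left, abs_mul, hτ, one_mul,
        abs_of_pos ht0] at this
      simpa using this)
    rwa [norm_smul, Real.norm_eq_abs, hτ, one_mul, norm_neg] at this
  refine ContinuousLinearMap.opNorm_le_bound _ (by positivity) fun v => ?_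
  have ev : v = v.1 • ((1, 0) : ℝ × ℝ) + v.2 • ((0, 1) : ℝ × ℝ) := by ext <;> simp
  have e : fderiv ℝ ψ (s * x, -y) v = v.1 • fderiv ℝ ψ (s * x, -y) (1, 0) +
      v.2 • fderiv ℝ ψ (s * x, -y) (0, 1) := by
    conv_lhs => rw [ev]
    rw [map_add, map_smul, map_smul]
  rw [e]
  calc _ ≤ ‖v.1‖ * ‖fderiv ℝ ψ (s * x, -y) (1, 0)‖ + ‖v.2‖ * ‖fderiv ℝ ψ (s * x, -y) (0, 1)‖ := by
        refine (norm_add_le _ _).trans ?_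
        rw [norm_smul, norm_smul]
    _ ≤ ‖v‖ * K + ‖v‖ * K := by
        gcongr
        · exact norm_fst_le v
        · exact norm_snd_le v
    _ = 2 * K * ‖v‖ := by ring

/-! ### Decay in the lower channel -/

/-- Proposition 1.2, lower-channel exponential decay: for `d < π`, a square-integrable
generalized eigenfunction of the one-window problem decays in the lower channel as
`O(e^{-Re√(π²/d² - λ)|x₁|})`, together with its gradient. -/
theorem stmt3
    (d a : ℝ) (hd0 : 0 < d) (hdπ : d < Real.pi) (ha : 0 < a)
    (lam : ℂ) (hlam : ∀ t : ℝ, 1 ≤ t → lam ≠ (t : ℂ))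
    (Pia : Set (ℝ × ℝ))
    (hPia : Pia = {p : ℝ × ℝ | (0 < p.2 ∧ p.2 < Real.pi) ∨ (-d < p.2 ∧ p.2 < 0) ∨
      (p.2 = 0 ∧ |p.1| < a)})
    (ψ : ℝ × ℝ → ℂ)
    (hcont : ContinuousOn ψ {p : ℝ × ℝ | -d ≤ p.2 ∧ p.2 ≤ Real.pi})
    (hsmooth : ContDiffOn ℝ (⊤ : ℕ∞) ψ Pia)
    (hL2 : IntegrableOn (fun p => ‖ψ p‖ ^ 2) Pia)
    (hL2grad : IntegrableOn (fun p => ‖fderiv ℝ ψ p‖ ^ 2) Pia)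
    (hHelm : ∀ p ∈ Pia, lap ψ p + lam * ψ p = 0)
    (hbdry : ∀ x₁ : ℝ, ψ (x₁, Real.pi) = 0 ∧ ψ (x₁, -d) = 0)
    (hwin : ∀ x₁ : ℝ, a ≤ |x₁| → ψ (x₁, 0) = 0) :
    ∃ C : ℝ, 0 < C ∧ ∀ x₁ x₂ : ℝ, a + 1 ≤ |x₁| → -d ≤ x₂ → x₂ ≤ 0 →
      ‖ψ (x₁, x₂)‖ ≤
        C * Real.exp (-(csqrt ((Real.pi ^ 2 / d ^ 2 : ℝ) - lam)).re * |x₁|) ∧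
      ‖fderiv ℝ ψ (x₁, x₂)‖ ≤
        C * Real.exp (-(csqrt ((Real.pi ^ 2 / d ^ 2 : ℝ) - lam)).re * |x₁|) := by
  have hsub : {p : ℝ × ℝ | -d < p.2 ∧ p.2 < 0} ⊆ Pia := by
    rw [hPia]
    exact fun p hp => Or.inr (Or.inl hp)
  have hside : ∀ s : ℝ, s = 1 ∨ s = -1 → ∃ C : ℝ, 0 < C ∧ ∀ x, a + 1 ≤ x → ∀ y ∈ Icc 0 d,
      ‖ψ (s * x, -y)‖ ≤ C * Real.exp (-(chanExp d lam 1).re * x) ∧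
      ‖fderiv ℝ ψ (s * x, -y)‖ ≤ C * Real.exp (-(chanExp d lam 1).re * x) := fun s hs =>
    channel_decay hs hd0 hdπ hlam ⟨_, _, _, _, halfStripSol_channel hs hd0 ha
      (hcont.mono fun p hp => ⟨hp.1, hp.2.trans Real.pi_pos.le⟩) (hsmooth.mono hsub)
      (hL2.mono_set hsub) (fun p hp => hHelm p (hsub hp)) (fun x₁ => (hbdry x₁).2) hwin⟩
  have hμ : csqrt ((Real.pi ^ 2 / d ^ 2 : ℝ) - lam) = chanExp d lam 1 := by simp [chanExp]
  rw [hμ]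
  obtain ⟨C₁, hC₁, h₁⟩ := hside 1 (Or.inl rfl)
  obtain ⟨C₂, hC₂, h₂⟩ := hside (-1) (Or.inr rfl)
  refine ⟨C₁ + C₂, by positivity, fun x₁ x₂ hx hy hy' => ?_⟩
  have hE := Real.exp_pos (-(chanExp d lam 1).re * |x₁|)
  have hm₁ := mul_pos hC₁ hE
  have hm₂ := mul_pos hC₂ hE
  rcases abs_choice x₁ with hx₁ | hx₁
  · have h := h₁ |x₁| hx (-x₂) ⟨by linarith, by linarith⟩
    rw [one_mul, neg_neg, show ((|x₁|, x₂) : ℝ × ℝ) = (x₁, x₂) by rw [hx₁]] at h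
    constructor <;> linarith [h.1, h.2]
  · have h := h₂ |x₁| hx (-x₂) ⟨by linarith, by linarith⟩
    rw [neg_neg, show ((-1 * |x₁|, x₂) : ℝ × ℝ) = (x₁, x₂) by rw [hx₁]; simp] at h
    constructor <;> linarith [h.1, h.2]

end
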